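/- Let d be an even positive integer and n a positive integer. Then ν₂(W_d(n)) ≥ 2·s₂(n). -/

import Mathlib

/-- `Wstar d n` is the number of Abelian squares: the sum over all tuples
`(x₁,…,x_d)` of nonnegative integers summing to `n` of the square of the
multinomial coefficient `n!/(x₁!⋯x_d!)`. -/
def Wstar (d n : ℕ) : ℕ :=
  ∑ x ∈ Finset.Nat.antidiagonalTuple d n, (Nat.multinomial Finset.univ x) ^ 2

/-- `W d n` is the number of `2n`-step closed walks at the origin in `ℤ^d`. -/
def W (d n : ℕ) : ℕ := Nat.choose (2 * n) n * Wstar d n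

/-- `s2 n` is the number of ones in the binary expansion of `n`. -/
def s2 (n : ℕ) : ℕ := (Nat.digits 2 n).sum

theorem s2_add (k r : ℕ) :
    padicValNat 2 ((k + r).choose k) + s2 (k + r) = s2 k + s2 r := by
  have h := Nat.add_choose_mul_factorial_mul_factorial r k
  rw [add_comm r k] at h
  have hc : (k + r).choose k ≠ 0 := (Nat.choose_pos (Nat.le_add_right k r)).ne'
  have h2 := congrArg (padicValNat 2) h
  rw [padicValNat.mul (mul_ne_zero hc (Nat.factorial_ne_zero _)) (Nat.factorial_ne_zero _),
    padicValNat.mul hc (Nat.factorial_ne_zero _)] at h2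
  have a := sub_one_mul_padicValNat_factorial (p := 2) k
  have b := sub_one_mul_padicValNat_factorial (p := 2) r
  have c := sub_one_mul_padicValNat_factorial (p := 2) (k + r)
  have a' := Nat.digit_sum_le 2 k
  have b' := Nat.digit_sum_le 2 r
  have c' := Nat.digit_sum_le 2 (k + r)
  unfold s2
  omega

theorem s2_two_mul (n : ℕ) : s2 (2 * n) = s2 n := by
  unfold s2
  rcases Nat.eq_zero_or_pos n with rfl | hn
  · simp
  · rw [Nat.digits_base_mul (by norm_num) hn]
    simp

theorem val_central (n : ℕ) : padicValNat 2 ((2 * n).choose n) = s2 n := by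
  have h := s2_add n n
  rw [← two_mul, s2_two_mul] at h
  omega

theorem multinomial_fin_cons {d : ℕ} (k : ℕ) (x : Fin d → ℕ) :
    Nat.multinomial Finset.univ (Fin.cons k x : Fin (d + 1) → ℕ) =
      (k + ∑ i, x i).choose k * Nat.multinomial Finset.univ x := by
  have h1 := Nat.multinomial_spec Finset.univ (Fin.cons k x : Fin (d + 1) → ℕ)
  have h2 := Nat.multinomial_spec Finset.univ x
  rw [Fin.prod_univ_succ, Fin.sum_univ_succ] at h1
  simp only [Fin.cons_zero, Fin.cons_succ] at h1
  have h3 := Nat.add_choose_mul_factorial_mul_factorial (∑ i, x i) k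
  rw [add_comm _ k, ← h1, ← h2] at h3
  have hp : 0 < k.factorial * ∏ i, (x i).factorial :=
    Nat.mul_pos (Nat.factorial_pos _) (Finset.prod_pos fun i _ => Nat.factorial_pos _)
  apply Nat.eq_of_mul_eq_mul_left hp
  rw [← h3]
  ring

theorem Wstar_succ (d n : ℕ) :
    Wstar (d + 1) n = ∑ p ∈ Finset.HasAntidiagonal.antidiagonal n, (n.choose p.1) ^ 2 * Wstar d p.2 := by
  unfold Wstar
  simp_rw [Finset.mul_sum]
  rw [Finset.sum_sigma']
  refine Finset.sum_bij' (fun x _ => ⟨(x 0, ∑ i, Fin.tail x i), Fin.tail x⟩)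
    (fun y _ => Fin.cons y.1.1 y.2) ?_ ?_ ?_ ?_ ?_
  · intro x hx
    rw [Finset.Nat.mem_antidiagonalTuple, Fin.sum_univ_succ] at hx
    simp [Finset.Nat.mem_antidiagonalTuple, Fin.tail, hx]
  · rintro ⟨⟨a, b⟩, y⟩ hy
    simp only [Finset.mem_sigma, Finset.HasAntidiagonal.mem_antidiagonal, Finset.Nat.mem_antidiagonalTuple] at hy
    rw [Finset.Nat.mem_antidiagonalTuple, Fin.sum_univ_succ]
    simp [hy]
  · intro x hx
    simp
  · rintro ⟨⟨a, b⟩, y⟩ hy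
    simp only [Finset.mem_sigma, Finset.HasAntidiagonal.mem_antidiagonal, Finset.Nat.mem_antidiagonalTuple] at hy
    obtain ⟨h1, rfl⟩ := hy
    simp
  · intro x hx
    rw [Finset.Nat.mem_antidiagonalTuple, Fin.sum_univ_succ] at hx
    have h := multinomial_fin_cons (x 0) (Fin.tail x)
    rw [Fin.cons_self_tail] at h
    rw [h, mul_pow]
    simp only [Fin.tail, hx]

theorem Wstar_add_two (d n : ℕ) :
    Wstar (d + 2) n =
      ∑ p ∈ Finset.HasAntidiagonal.antidiagonal n, (n.choose p.1) ^ 2 * ((2 * p.1).choose p.1 * Wstar d p.2) := by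
  rw [Wstar_succ]
  have key (m : ℕ) : (2 * m).choose m =
      ∑ q ∈ Finset.HasAntidiagonal.antidiagonal m, (m.choose q.1) ^ 2 := by
    rw [← Nat.sum_range_choose_sq]
    exact (Finset.Nat.sum_antidiagonal_eq_sum_range_succ (fun i _ => m.choose i ^ 2) m).symm
  simp_rw [Wstar_succ, key, Finset.sum_mul, Finset.mul_sum]
  rw [Finset.sum_sigma', Finset.sum_sigma']
  refine Finset.sum_bij' (fun y _ => ⟨(y.1.1 + y.2.1, y.2.2), (y.1.1, y.2.1)⟩)
    (fun y _ => ⟨(y.2.1, y.2.2 + y.1.2), (y.2.2, y.1.2)⟩) ?_ ?_ ?_ ?_ ?_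
  · rintro ⟨⟨a, b⟩, ⟨c, e⟩⟩ h
    simp only [Finset.mem_sigma, Finset.HasAntidiagonal.mem_antidiagonal, and_true] at h ⊢
    omega
  · rintro ⟨⟨a, b⟩, ⟨c, e⟩⟩ h
    simp only [Finset.mem_sigma, Finset.HasAntidiagonal.mem_antidiagonal, and_true] at h ⊢
    omega
  · rintro ⟨⟨a, b⟩, ⟨c, e⟩⟩ h
    simp only [Finset.mem_sigma, Finset.HasAntidiagonal.mem_antidiagonal] at h ⊢
    obtain ⟨-, rfl⟩ := h
    rfl
  · rintro ⟨⟨a, b⟩, ⟨c, e⟩⟩ h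
    simp only [Finset.mem_sigma, Finset.HasAntidiagonal.mem_antidiagonal] at h ⊢
    obtain ⟨-, rfl⟩ := h
    rfl
  · rintro ⟨⟨a, b⟩, ⟨c, e⟩⟩ h
    simp only [Finset.mem_sigma, Finset.HasAntidiagonal.mem_antidiagonal] at h ⊢
    obtain ⟨h1, rfl⟩ := h
    have h2 := Nat.choose_mul (n := n) (k := a + c) (s := a) (by omega)
    rw [show n - a = c + e by omega, show a + c - a = c by omega] at h2
    rw [← mul_assoc, ← mul_assoc, ← mul_pow, ← mul_pow, h2]

theorem pow_dvd_Wstar (e n : ℕ) : 2 ^ s2 n ∣ Wstar (2 * e) n := by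
  induction e generalizing n with
  | zero =>
    cases n with
    | zero => simp [s2]
    | succ n => simp [Wstar]
  | succ e ih =>
    rw [mul_add, mul_one, Wstar_add_two]
    refine Finset.dvd_sum ?_
    rintro ⟨k, r⟩ hp
    rw [Finset.HasAntidiagonal.mem_antidiagonal] at hp
    simp only at hp ⊢
    subst hp
    have h := s2_add k r
    have h1 : 2 ^ padicValNat 2 ((k + r).choose k) ∣ (k + r).choose k := pow_padicValNat_dvd
    have h2 : 2 ^ s2 k ∣ (2 * k).choose k := by
      rw [← val_central]; exact pow_padicValNat_dvd
    have h3 := mul_dvd_mul (pow_dvd_pow_of_dvd h1 2) (mul_dvd_mul h2 (ih r))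
    refine dvd_trans ?_ h3
    rw [← pow_mul, ← pow_add, ← pow_add]
    exact pow_dvd_pow _ (by omega)

theorem Wstar_pos (d n : ℕ) : 0 < Wstar (d + 1) n := by
  unfold Wstar
  refine Finset.sum_pos (fun x _ => pow_pos (Nat.multinomial_pos _ _) 2) ⟨Pi.single 0 n, ?_⟩
  rw [Finset.Nat.mem_antidiagonalTuple]
  simp

theorem stmt_6 (d n : ℕ) (hd : 0 < d) (heven : Even d) (hn : 0 < n) :
    2 * s2 n ≤ padicValNat 2 (W d n) := by
  have hc : (2 * n).choose n ≠ 0 := (Nat.choose_pos (by omega)).ne'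
  have hw : Wstar d n ≠ 0 := by
    obtain ⟨e, rfl⟩ : ∃ e, d = e + 1 := ⟨d - 1, by omega⟩
    exact (Wstar_pos e n).ne'
  obtain ⟨e, rfl⟩ := heven
  have h := pow_dvd_Wstar e n
  rw [← two_mul] at hw ⊢
  have h2 := (padicValNat_dvd_iff_le hw).1 h
  unfold W
  rw [padicValNat.mul hc hw, val_central]
  omega
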